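/- Let M be a maximum matching in G and let ρ be either an alternating cycle with respect to M, or an alternating path with respect to M such that one endpoint of ρ is unmatched in M (with the edge of ρ at that endpoint not in M) and the edge of ρ at the other endpoint belongs to M. If wt_M(ρ) ≥ 2, then N = M ⊕ ρ (the symmetric difference) is a maximum matching in G satisfying Δ(N,M) ≥ wt_M(ρ) − 1 ≥ 1; in particular N is a maximum matching that is more popular than M. -/

import Mathlib

open Classical

noncomputable section

namespace PopMax

/-- A bipartite preference instance `G = (A ∪ B, E)`:
`E a b` says there is an edge between `a ∈ A` and `b ∈ B`;
`prefA a b b'` says `a` strictly prefers `b` to `b'`;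
`prefB b a a'` says `b` strictly prefers `a` to `a'`. -/
structure PrefSys (A : Type*) (B : Type*) where
  E : A → B → Prop
  prefA : A → B → B → Prop
  prefB : B → A → A → Prop

/-- Every node has a strict (linear) preference order over its neighbors. -/
def PrefSys.IsValid {A B : Type*} (I : PrefSys A B) : Prop :=
  (∀ a b, ¬ I.prefA a b b) ∧
  (∀ a b₁ b₂ b₃, I.prefA a b₁ b₂ → I.prefA a b₂ b₃ → I.prefA a b₁ b₃) ∧
  (∀ a b₁ b₂, I.E a b₁ → I.E a b₂ → b₁ ≠ b₂ → I.prefA a b₁ b₂ ∨ I.prefA a b₂ b₁) ∧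
  (∀ b a, ¬ I.prefB b a a) ∧
  (∀ b a₁ a₂ a₃, I.prefB b a₁ a₂ → I.prefB b a₂ a₃ → I.prefB b a₁ a₃) ∧
  (∀ b a₁ a₂, I.E a₁ b → I.E a₂ b → a₁ ≠ a₂ → I.prefB b a₁ a₂ ∨ I.prefB b a₂ a₁)

variable {A B : Type*}

/-- A matching: a set of pairwise disjoint edges. -/
def IsMatching (I : PrefSys A B) (M : Finset (A × B)) : Prop :=
  (∀ p ∈ M, I.E p.1 p.2) ∧
  (∀ p ∈ M, ∀ q ∈ M, p.1 = q.1 → p = q) ∧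
  (∀ p ∈ M, ∀ q ∈ M, p.2 = q.2 → p = q)

def matchedA (M : Finset (A × B)) (a : A) : Prop := ∃ b, (a, b) ∈ M
def matchedB (M : Finset (A × B)) (b : B) : Prop := ∃ a, (a, b) ∈ M

/-- A maximum matching: a matching of maximum cardinality. -/
def IsMaximumMatching (I : PrefSys A B) (M : Finset (A × B)) : Prop :=
  IsMatching I M ∧ ∀ N : Finset (A × B), IsMatching I N → N.card ≤ M.card

/-- A perfect matching matches all nodes. -/
def IsPerfectMatching (I : PrefSys A B) (M : Finset (A × B)) : Prop :=
  IsMatching I M ∧ (∀ a, matchedA M a) ∧ (∀ b, matchedB M b)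

/-- `a ∈ A` prefers matching `M` to matching `N`. -/
def prefersA (I : PrefSys A B) (a : A) (M N : Finset (A × B)) : Prop :=
  ∃ b, (a, b) ∈ M ∧ (¬ matchedA N a ∨ ∃ b', (a, b') ∈ N ∧ I.prefA a b b')

/-- `b ∈ B` prefers matching `M` to matching `N`. -/
def prefersB (I : PrefSys A B) (b : B) (M N : Finset (A × B)) : Prop :=
  ∃ a, (a, b) ∈ M ∧ (¬ matchedB N b ∨ ∃ a', (a', b) ∈ N ∧ I.prefB b a a')

/-- A node `u ∈ A ∪ B` prefers matching `M` to matching `N`. -/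
def prefers (I : PrefSys A B) (u : A ⊕ B) (M N : Finset (A × B)) : Prop :=
  match u with
  | Sum.inl a => prefersA I a M N
  | Sum.inr b => prefersB I b M N

/-- `φ(M,N)`: the number of nodes preferring `M` to `N`. -/
def phi [Fintype A] [Fintype B] (I : PrefSys A B) (M N : Finset (A × B)) : ℕ :=
  (Finset.univ.filter (fun u : A ⊕ B => prefers I u M N)).card

/-- `Δ(M,N) = φ(M,N) − φ(N,M)`. -/
def Delta [Fintype A] [Fintype B] (I : PrefSys A B) (M N : Finset (A × B)) : ℤ :=
  (phi I M N : ℤ) - (phi I N M : ℤ)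

/-- A popular max-matching: a maximum matching `M` with `Δ(M,N) ≥ 0`
for every maximum matching `N`. -/
def IsPopularMaxMatching [Fintype A] [Fintype B] (I : PrefSys A B)
    (M : Finset (A × B)) : Prop :=
  IsMaximumMatching I M ∧
    ∀ N : Finset (A × B), IsMaximumMatching I N → 0 ≤ Delta I M N

/-- The edge `(a,b) ∉ M` blocks `M`. -/
def Blocks (I : PrefSys A B) (M : Finset (A × B)) (a : A) (b : B) : Prop :=
  I.E a b ∧ (a, b) ∉ M ∧
  (¬ matchedA M a ∨ ∃ b', (a, b') ∈ M ∧ I.prefA a b b') ∧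
  (¬ matchedB M b ∨ ∃ a', (a', b) ∈ M ∧ I.prefB b a a')

/-- A stable matching: a matching with no blocking edge. -/
def IsStable (I : PrefSys A B) (S : Finset (A × B)) : Prop :=
  IsMatching I S ∧ ∀ a b, ¬ Blocks I S a b

/-- The edge weight `wt_M(a,b) ∈ {0, ±2}`. -/
def wt (I : PrefSys A B) (M : Finset (A × B)) (a : A) (b : B) : ℤ :=
  if Blocks I M a b then 2
  else if (∃ b', (a, b') ∈ M ∧ I.prefA a b' b) ∧ (∃ a', (a', b) ∈ M ∧ I.prefB b a' a) then -2
  else 0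

/-- The underlying simple graph on the node set `A ⊕ B`. -/
def graphOf (I : PrefSys A B) : SimpleGraph (A ⊕ B) :=
  SimpleGraph.fromRel (fun u w =>
    match u, w with
    | Sum.inl a, Sum.inr b => I.E a b
    | _, _ => False)

/-- The (undirected) edge `e` is an edge of the matching `M`. -/
def edgeInM (M : Finset (A × B)) (e : Sym2 (A ⊕ B)) : Prop :=
  ∃ a b, (a, b) ∈ M ∧ e = s(Sum.inl a, Sum.inr b)

/-- Consecutive edges alternate between `M` and `E ∖ M`. -/
def altRel (M : Finset (A × B)) (e f : Sym2 (A ⊕ B)) : Prop :=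
  edgeInM M e ↔ ¬ edgeInM M f

/-- An alternating path with respect to `M`. -/
def IsAltPath (I : PrefSys A B) (M : Finset (A × B)) {u w : A ⊕ B}
    (p : (graphOf I).Walk u w) : Prop :=
  p.IsPath ∧ List.Chain' (altRel M) p.edges

/-- An alternating cycle with respect to `M` (alternation also across the wrap-around). -/
def IsAltCycle (I : PrefSys A B) (M : Finset (A × B)) {w : A ⊕ B}
    (c : (graphOf I).Walk w w) : Prop :=
  c.IsCycle ∧ List.Chain' (altRel M) (c.edges ++ c.edges.take 1)

/-- `wt_M` as a function on undirected edges. -/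
def wtSym (I : PrefSys A B) (M : Finset (A × B)) : Sym2 (A ⊕ B) → ℤ :=
  Sym2.lift ⟨fun u w =>
      match u, w with
      | Sum.inl a, Sum.inr b => wt I M a b
      | Sum.inr b, Sum.inl a => wt I M a b
      | _, _ => 0,
    by rintro (a | b) (a' | b') <;> rfl⟩

/-- `wt_M(ρ) = Σ_{e ∈ ρ} wt_M(e)` for a walk `ρ`. -/
def wtWalk (I : PrefSys A B) (M : Finset (A × B)) {u w : A ⊕ B}
    (p : (graphOf I).Walk u w) : ℤ :=
  (p.edges.map (wtSym I M)).sum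

/-- The node `u ∈ A ∪ B` is unmatched in `M`. -/
def unmatchedNode (M : Finset (A × B)) : A ⊕ B → Prop
  | Sum.inl a => ¬ matchedA M a
  | Sum.inr b => ¬ matchedB M b

/-- The set of edges `(a,b) ∈ A × B` used by the walk `p`. -/
def pairsOf [Fintype A] [Fintype B] (I : PrefSys A B) {u w : A ⊕ B}
    (p : (graphOf I).Walk u w) : Finset (A × B) :=
  Finset.univ.filter (fun ab : A × B => s(Sum.inl ab.1, Sum.inr ab.2) ∈ p.edges)

/-- `M` is Pareto-optimal: no matching `N` has `φ(N,M) > 0` and `φ(M,N) = 0`. -/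
def IsParetoOptimal [Fintype A] [Fintype B] (I : PrefSys A B) (M : Finset (A × B)) : Prop :=
  ¬ ∃ N : Finset (A × B), IsMatching I N ∧ 0 < phi I N M ∧ phi I M N = 0

/-! ### The auxiliary instance `G*` -/

/-- `A* = {a_0, …, a_{n0−1} : a ∈ A}` where `n0 = |A|`. -/
abbrev AStar (A : Type*) [Fintype A] : Type _ := A × Fin (Fintype.card A)

/-- `B* = B̃ ∪ {d_1(a), …, d_{n0−1}(a) : a ∈ A}`; the dummy node `(a, j)`
(with `j : Fin (n0 − 1)`) stands for `d_{j+1}(a)`. -/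
abbrev BStar (A : Type*) (B : Type*) [Fintype A] : Type _ :=
  B ⊕ (A × Fin (Fintype.card A - 1))

/-- The auxiliary instance `G*` with its edges and preferences. -/
def starSys [Fintype A] (I : PrefSys A B) : PrefSys (AStar A) (BStar A B) where
  E := fun ai w =>
    match ai, w with
    | (a, _i), Sum.inl b => I.E a b
    | (a, i), Sum.inr (a', j) => a = a' ∧ ((i : ℕ) = (j : ℕ) ∨ (i : ℕ) = (j : ℕ) + 1)
  prefA := fun ai u v =>
    match ai, u, v with
    | (a, _i), Sum.inl b, Sum.inl b' => I.prefA a b b'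
    | (a, i), Sum.inl _b, Sum.inr (a', j) => a = a' ∧ (j : ℕ) = (i : ℕ)
    | (a, i), Sum.inr (a', j), Sum.inl _b => a = a' ∧ (j : ℕ) + 1 = (i : ℕ)
    | (a, i), Sum.inr (a', j), Sum.inr (a'', j') =>
        a = a' ∧ a = a'' ∧ (j : ℕ) + 1 = (i : ℕ) ∧ (j' : ℕ) = (i : ℕ)
  prefB := fun w x y =>
    match w, x, y with
    | Sum.inl b, (a, i), (a', i') =>
        (i' : ℕ) < (i : ℕ) ∨ ((i : ℕ) = (i' : ℕ) ∧ I.prefB b a a')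
    | Sum.inr (a, j), (a', i), (a'', i') =>
        a' = a ∧ a'' = a ∧ (i : ℕ) = (j : ℕ) ∧ (i' : ℕ) = (j : ℕ) + 1

/-- The projection `S ↦ S'`: delete edges incident to dummy nodes and replace
`(a_i, b̃)` by `(a, b)`. -/
def proj [Fintype A] [Fintype B] (S : Finset (AStar A × BStar A B)) : Finset (A × B) :=
  Finset.univ.filter (fun ab : A × B =>
    ∃ i : Fin (Fintype.card A), ((ab.1, i), (Sum.inl ab.2 : BStar A B)) ∈ S)

/-- `a ∈ A_i` for the level partition of `A` induced by a (stable) matching `S` in `G*`: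
for `i ≤ n0 − 2`, `a ∈ A_i` iff `(a_i, b̃) ∈ S` for some `b̃ ∈ B̃`;
`A_{n0−1}` consists of all remaining nodes of `A`. -/
def AtLevelA [Fintype A] (S : Finset (AStar A × BStar A B)) (a : A) (i : ℕ) : Prop :=
  (i + 1 < Fintype.card A ∧
     ∃ j : Fin (Fintype.card A), (j : ℕ) = i ∧
       ∃ b : B, ((a, j), (Sum.inl b : BStar A B)) ∈ S) ∨
  (i + 1 = Fintype.card A ∧
     ∀ j : Fin (Fintype.card A), (j : ℕ) + 1 < Fintype.card A →
       ∀ b : B, ((a, j), (Sum.inl b : BStar A B)) ∉ S)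

/-- `b ∈ B_i` for the level partition of `B` induced by a (stable) matching `S` in `G*`:
for `1 ≤ i ≤ n0 − 1`, `b ∈ B_i` iff `(a_i, b̃) ∈ S` for some `a ∈ A_i`;
`B_0` consists of all remaining nodes of `B`. -/
def AtLevelB [Fintype A] (S : Finset (AStar A × BStar A B)) (b : B) (i : ℕ) : Prop :=
  (1 ≤ i ∧ i < Fintype.card A ∧
     ∃ j : Fin (Fintype.card A), (j : ℕ) = i ∧
       ∃ a : A, AtLevelA S a i ∧ ((a, j), (Sum.inl b : BStar A B)) ∈ S) ∨
  (i = 0 ∧ ∀ j : Fin (Fintype.card A), 1 ≤ (j : ℕ) →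
       ∀ a : A, AtLevelA S a (j : ℕ) → ((a, j), (Sum.inl b : BStar A B)) ∉ S)


/-!
For matchings `M` and `N`, only nodes on edges of `M ∆ N` have an opinion. The two endpoints of an
edge `e ∈ N \ M` together cast `wt_M(e)` votes for `N`, and a node that `N` leaves unmatched votes
for `M`. Hence `Δ(N, M) = wt_M(N \ M) - #{nodes matched in M but not in N}`.

For `N = M ∆ ρ` this evaluates exactly. On an alternating cycle both the edges in `M` and those
outside `M` cover every node, so `Δ(N, M) = wt_M(ρ)`. On an alternating path from an unmatched node
`s` to a node `t` at an edge of `M`, the edges in `M` miss only `s` and the others miss only `t`,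
so `Δ(N, M) = wt_M(ρ) - 1`. In both cases `M` and `N` have equally many edges.
-/

section AlternatingWalks

variable {V : Type*} {G : SimpleGraph V} {u v x : V} {p : G.Walk u v} {Q : Sym2 V → Prop}

theorem mem_getElem_edges_iff {i : ℕ} (hi : i < p.edges.length) :
    x ∈ p.edges[i] ↔ x = p.getVert i ∨ x = p.getVert (i + 1) := by
  rw [SimpleGraph.Walk.getElem_edges, Sym2.mem_iff]

theorem eq_succ_of_mem_edges_of_isPath (hp : p.IsPath) {i j : ℕ} (hij : i < j)
    (hj : j < p.edges.length) (hxi : x ∈ p.edges[i]) (hxj : x ∈ p.edges[j]) : j = i + 1 := by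
  have hinj : ∀ k l, k ≤ p.length → l ≤ p.length → p.getVert k = p.getVert l → k = l :=
    fun _ _ hk hl h => hp.getVert_injOn hk hl h
  have hlen := p.length_edges
  rw [mem_getElem_edges_iff] at hxi hxj
  grind

theorem eq_succ_or_of_mem_edges_of_isCycle {c : G.Walk v v} (hc : c.IsCycle) {i j : ℕ}
    (hij : i < j) (hj : j < c.edges.length) (hxi : x ∈ c.edges[i]) (hxj : x ∈ c.edges[j]) :
    j = i + 1 ∨ i = 0 ∧ j = c.edges.length - 1 := by
  have hinj : ∀ k l, 1 ≤ k → k ≤ c.length → 1 ≤ l → l ≤ c.length →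
      c.getVert k = c.getVert l → k = l :=
    fun _ _ hk hk' hl hl' h => hc.getVert_injOn ⟨hk, hk'⟩ ⟨hl, hl'⟩ h
  have hclosed : c.getVert 0 = c.getVert c.length := by simp
  have hlen := c.length_edges
  rw [mem_getElem_edges_iff] at hxi hxj
  grind

theorem pairwise_edges_alternate_of_isPath (hp : p.IsPath)
    (halt : p.edges.IsChain fun e f => (Q e ↔ ¬ Q f)) :
    p.edges.Pairwise fun e f => ∀ x ∈ e, x ∈ f → (Q e ↔ ¬ Q f) := by
  refine List.pairwise_iff_getElem.2 fun i j _ hj hij x hxi hxj => ?_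
  obtain rfl := eq_succ_of_mem_edges_of_isPath hp hij hj hxi hxj
  exact List.isChain_iff_getElem.1 halt i hj

theorem pairwise_edges_alternate_of_isCycle {c : G.Walk v v} (hc : c.IsCycle)
    (hne : c.edges ≠ []) (halt : c.edges.IsChain fun e f => (Q e ↔ ¬ Q f))
    (hwrap : Q (c.edges.getLast hne) ↔ ¬ Q (c.edges.head hne)) :
    c.edges.Pairwise fun e f => ∀ x ∈ e, x ∈ f → (Q e ↔ ¬ Q f) := by
  refine List.pairwise_iff_getElem.2 fun i j _ hj hij x hxi hxj => ?_
  obtain rfl | ⟨rfl, rfl⟩ := eq_succ_or_of_mem_edges_of_isCycle hc hij hj hxi hxj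
  · exact List.isChain_iff_getElem.1 halt i hj
  · rw [List.getLast_eq_getElem, List.head_eq_getElem_zero] at hwrap
    tauto

theorem exists_mem_edges_of_ne_of_ne (halt : p.edges.IsChain fun e f => (Q e ↔ ¬ Q f))
    (hx : x ∈ p.support) (hxu : x ≠ u) (hxv : x ≠ v) : ∃ e ∈ p.edges, x ∈ e ∧ Q e := by
  obtain ⟨i, rfl, hi⟩ := SimpleGraph.Walk.mem_support_iff_exists_getVert.1 hx
  obtain _ | k := i
  · simp at hxu
  have hk : k + 1 < p.edges.length := by
    have : k + 1 ≠ p.length := fun h => hxv (by simp [h])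
    rw [p.length_edges]
    lia
  have hmem : p.getVert (k + 1) ∈ p.edges[k] := (mem_getElem_edges_iff _).2 (.inr rfl)
  have hmem' : p.getVert (k + 1) ∈ p.edges[k + 1] := (mem_getElem_edges_iff _).2 (.inl rfl)
  have hQ : Q p.edges[k] ↔ ¬ Q p.edges[k + 1] := List.isChain_iff_getElem.1 halt k hk
  grind [List.getElem_mem]

theorem exists_mem_edges_iff_mem_support {c : G.Walk v v} (hne : c.edges ≠ [])
    (halt : c.edges.IsChain fun e f => (Q e ↔ ¬ Q f))
    (hwrap : Q (c.edges.getLast hne) ↔ ¬ Q (c.edges.head hne)) :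
    (∃ e ∈ c.edges, x ∈ e ∧ Q e) ↔ x ∈ c.support := by
  constructor
  · rintro ⟨e, he, hxe, -⟩
    exact SimpleGraph.Walk.mem_support_of_mem_edges he hxe
  · intro hx
    obtain rfl | hxv := eq_or_ne x v
    · by_cases hQ : Q (c.edges.head hne)
      · exact ⟨_, List.head_mem hne, by simp, hQ⟩
      · exact ⟨_, List.getLast_mem hne, by simp, hwrap.2 hQ⟩
    · exact exists_mem_edges_of_ne_of_ne halt hx hxv hxv

theorem eq_head_of_start_mem_of_isPath (hp : p.IsPath) (hne : p.edges ≠ []) {e : Sym2 V}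
    (he : e ∈ p.edges) (hu : u ∈ e) : e = p.edges.head hne := by
  obtain ⟨i, hi, rfl⟩ := List.mem_iff_getElem.1 he
  have hinj : ∀ k, k ≤ p.length → u = p.getVert k → k = 0 := fun k hk h =>
    hp.getVert_injOn hk (Nat.zero_le _) (by simpa using h.symm)
  have hlen := p.length_edges
  rw [mem_getElem_edges_iff] at hu
  have hi0 : i = 0 := by grind
  simp only [hi0, List.head_eq_getElem_zero]

theorem exists_mem_edges_iff_ne_start_of_isPath (hp : p.IsPath) (hne : p.edges ≠ [])
    (halt : p.edges.IsChain fun e f => (Q e ↔ ¬ Q f)) (hhead : ¬ Q (p.edges.head hne))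
    (hlast : Q (p.edges.getLast hne)) :
    (∃ e ∈ p.edges, x ∈ e ∧ Q e) ↔ x ≠ u ∧ x ∈ p.support := by
  constructor
  · rintro ⟨e, he, hxe, hQ⟩
    refine ⟨?_, SimpleGraph.Walk.mem_support_of_mem_edges he hxe⟩
    rintro rfl
    exact hhead (eq_head_of_start_mem_of_isPath hp hne he hxe ▸ hQ)
  · rintro ⟨hxu, hx⟩
    obtain rfl | hxv := eq_or_ne x v
    · exact ⟨_, List.getLast_mem hne, by simp, hlast⟩
    · exact exists_mem_edges_of_ne_of_ne halt hx hxu hxv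

theorem exists_mem_edges_iff_ne_end_of_isPath (hp : p.IsPath) (hne : p.edges ≠ [])
    (halt : p.edges.IsChain fun e f => (Q e ↔ ¬ Q f)) (hhead : Q (p.edges.head hne))
    (hlast : ¬ Q (p.edges.getLast hne)) :
    (∃ e ∈ p.edges, x ∈ e ∧ Q e) ↔ x ≠ v ∧ x ∈ p.support := by
  have halt' : p.reverse.edges.IsChain fun e f => (Q e ↔ ¬ Q f) := by
    rw [SimpleGraph.Walk.edges_reverse, List.isChain_reverse]
    exact halt.imp fun e f h => by tauto
  simpa using exists_mem_edges_iff_ne_start_of_isPath (x := x) hp.reverse (by simpa using hne)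
    halt' (by simpa using hlast) (by simpa using hhead)

theorem isChain_append_take_one_iff {α : Type*} {R : α → α → Prop} {l : List α} (hne : l ≠ []) :
    (l ++ l.take 1).IsChain R ↔ l.IsChain R ∧ R (l.getLast hne) (l.head hne) := by
  obtain _ | ⟨a, l⟩ := l
  · contradiction
  · rw [List.isChain_append]
    simp [List.getLast?_eq_some_getLast]

end AlternatingWalks

section Matchings

/-- The edge of the underlying graph given by a pair `(a, b)`. -/
def edgeOf (p : A × B) : Sym2 (A ⊕ B) := s(Sum.inl p.1, Sum.inr p.2)

@[simp]
theorem inl_mem_edgeOf {a : A} {p : A × B} : Sum.inl a ∈ edgeOf p ↔ a = p.1 := by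
  simp [edgeOf]

@[simp]
theorem inr_mem_edgeOf {b : B} {p : A × B} : Sum.inr b ∈ edgeOf p ↔ b = p.2 := by
  simp [edgeOf]

theorem edgeOf_injective : Function.Injective (edgeOf : A × B → Sym2 (A ⊕ B)) := by
  rintro ⟨a, b⟩ ⟨a', b'⟩ h
  simpa [edgeOf] using h

variable {I : PrefSys A B} {M N P : Finset (A × B)} {p q : A × B} {x : A ⊕ B}

@[simp]
theorem edgeInM_edgeOf : edgeInM M (edgeOf p) ↔ p ∈ M := by
  constructor
  · rintro ⟨a, b, hab, h⟩
    rwa [edgeOf_injective (a₁ := p) (a₂ := (a, b)) h]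
  · exact fun h => ⟨p.1, p.2, h, rfl⟩

theorem isMatching_iff : IsMatching I M ↔
    (∀ p ∈ M, I.E p.1 p.2) ∧ ∀ x, ∀ p ∈ M, ∀ q ∈ M, x ∈ edgeOf p → x ∈ edgeOf q → p = q := by
  simp only [IsMatching, Sum.forall, inl_mem_edgeOf, inr_mem_edgeOf]
  constructor
  · rintro ⟨hE, hA, hB⟩
    exact ⟨hE, fun _ p hp q hq h h' => hA p hp q hq (h.symm.trans h'),
      fun _ p hp q hq h h' => hB p hp q hq (h.symm.trans h')⟩
  · rintro ⟨hE, hA, hB⟩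
    exact ⟨hE, fun p hp q hq => hA p.1 p hp q hq rfl, fun p hp q hq => hB p.2 p hp q hq rfl⟩

theorem IsMatching.eq_of_mem (hM : IsMatching I M) (hp : p ∈ M) (hq : q ∈ M)
    (hxp : x ∈ edgeOf p) (hxq : x ∈ edgeOf q) : p = q :=
  (isMatching_iff.1 hM).2 x p hp q hq hxp hxq

theorem IsMatching.mono (hN : IsMatching I N) (h : M ⊆ N) : IsMatching I M :=
  isMatching_iff.2 ⟨fun p hp => hN.1 p (h hp),
    fun _ _ hp _ hq => hN.eq_of_mem (h hp) (h hq)⟩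

theorem IsMaximumMatching.of_card_eq (hM : IsMaximumMatching I M) (hN : IsMatching I N)
    (h : N.card = M.card) : IsMaximumMatching I N :=
  ⟨hN, fun N' hN' => h ▸ hM.2 N' hN'⟩

variable [DecidableEq A] [DecidableEq B]

/-- The nodes incident to an edge of `P`. When `P` is a matching, these are the matched nodes. -/
def coveredNodes (P : Finset (A × B)) : Finset (A ⊕ B) :=
  (P.image Prod.fst).disjSum (P.image Prod.snd)

theorem mem_coveredNodes : x ∈ coveredNodes P ↔ ∃ p ∈ P, x ∈ edgeOf p := by
  obtain a | b := x <;> simp [coveredNodes]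

theorem unmatchedNode_iff : unmatchedNode M x ↔ x ∉ coveredNodes M := by
  obtain a | b := x <;> simp [unmatchedNode, matchedA, matchedB, coveredNodes]

theorem IsMatching.sum_coveredNodes (hM : IsMatching I M) (f : A ⊕ B → ℤ) :
    ∑ x ∈ coveredNodes M, f x = ∑ p ∈ M, (f (Sum.inl p.1) + f (Sum.inr p.2)) := by
  rw [coveredNodes, Finset.sum_disjSum, Finset.sum_image fun p hp q hq => hM.2.1 p hp q hq,
    Finset.sum_image fun p hp q hq => hM.2.2 p hp q hq, Finset.sum_add_distrib]

theorem IsMatching.card_coveredNodes (hM : IsMatching I M) :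
    (coveredNodes M).card = 2 * M.card := by
  have h := hM.sum_coveredNodes fun _ => 1
  simp only [Finset.sum_const, nsmul_eq_mul] at h
  lia

theorem IsMatching.union (hM : IsMatching I M) (hN : IsMatching I N)
    (h : Disjoint (coveredNodes M) (coveredNodes N)) : IsMatching I (M ∪ N) := by
  rw [isMatching_iff] at hM hN ⊢
  simp only [Finset.disjoint_left, mem_coveredNodes] at h
  grind

theorem isMatching_symmDiff (hM : IsMatching I M) (hP : IsMatching I (P \ M))
    (h : coveredNodes (P \ M) ∩ coveredNodes M ⊆ coveredNodes (M ∩ P)) :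
    IsMatching I (symmDiff M P) := by
  refine IsMatching.union (hM.mono Finset.sdiff_subset) hP (Finset.disjoint_left.2 ?_)
  intro x hxM hxP
  obtain ⟨p, hp, hxp⟩ := mem_coveredNodes.1 hxM
  obtain ⟨hpM, hpP⟩ := Finset.mem_sdiff.1 hp
  have hx : x ∈ coveredNodes (M ∩ P) :=
    h (Finset.mem_inter.2 ⟨hxP, mem_coveredNodes.2 ⟨p, hpM, hxp⟩⟩)
  obtain ⟨q, hq, hxq⟩ := mem_coveredNodes.1 hx
  obtain ⟨hqM, hqP⟩ := Finset.mem_inter.1 hq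
  exact hpP (hM.eq_of_mem hpM hqM hxp hxq ▸ hqP)

theorem card_symmDiff_eq_card (hM : IsMatching I M) (hP : IsMatching I (P \ M))
    (h : (coveredNodes (M ∩ P)).card = (coveredNodes (P \ M)).card) :
    (symmDiff M P).card = M.card := by
  rw [← Finset.card_sdiff_eq_card_sdiff_iff, symmDiff_sdiff_left, sdiff_symmDiff_left,
    Finset.inf_eq_inter]
  rw [hP.card_coveredNodes, (hM.mono Finset.inter_subset_left).card_coveredNodes] at h
  lia

end Matchings

section Votes

variable {I : PrefSys A B} {M N P : Finset (A × B)} {p q : A × B} {x : A ⊕ B}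

/-- `I.nodePref x p q` says that the node `x` prefers its partner in the edge `p` to its partner in
the edge `q`; it is meaningful only when `x` is an endpoint of both. -/
def PrefSys.nodePref (I : PrefSys A B) : A ⊕ B → A × B → A × B → Prop
  | Sum.inl a, p, q => I.prefA a p.2 q.2
  | Sum.inr b, p, q => I.prefB b p.1 q.1

/-- Of two distinct edges at a node, the node prefers exactly one, so that preferences are
tournaments: unlike in `PrefSys.IsValid`, they may be intransitive. -/
structure PrefSys.IsTournament (I : PrefSys A B) : Prop where
  asymm : ∀ x p q, I.nodePref x p q → ¬ I.nodePref x q p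
  total : ∀ x p q, I.E p.1 p.2 → I.E q.1 q.2 → x ∈ edgeOf p → x ∈ edgeOf q → p ≠ q →
    I.nodePref x p q ∨ I.nodePref x q p

theorem PrefSys.IsValid.isTournament (hI : I.IsValid) : I.IsTournament := by
  obtain ⟨irreflA, transA, totalA, irreflB, transB, totalB⟩ := hI
  constructor
  · rintro (a | b) p q hpq hqp
    · exact irreflA _ _ (transA _ _ _ _ hpq hqp)
    · exact irreflB _ _ (transB _ _ _ _ hpq hqp)
  · rintro (a | b) ⟨a₁, b₁⟩ ⟨a₂, b₂⟩ hp hq hxp hxq hne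
    · obtain rfl : a = a₁ := by simpa using hxp
      obtain rfl : a = a₂ := by simpa using hxq
      exact totalA _ _ _ hp hq (by simpa using hne)
    · obtain rfl : b = b₁ := by simpa using hxp
      obtain rfl : b = b₂ := by simpa using hxq
      exact totalB _ _ _ hp hq (by simpa using hne)

theorem wt_eq_zero_of_mem (hI : I.IsTournament) (hM : IsMatching I M) (hp : p ∈ M) :
    wt I M p.1 p.2 = 0 := by
  have hbest : ¬ ∃ b, (p.1, b) ∈ M ∧ I.prefA p.1 b p.2 := by
    rintro ⟨b, hb, hpref⟩
    obtain rfl : b = p.2 := congrArg Prod.snd (hM.2.1 _ hb _ hp rfl)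
    exact hI.asymm (Sum.inl p.1) p p hpref hpref
  rw [wt, if_neg fun h => h.2.1 hp, if_neg fun h => hbest h.1]

theorem blocks_iff_prefers {a : A} {b : B} (hN : IsMatching I N) (hp : (a, b) ∈ N)
    (hpM : (a, b) ∉ M) :
    Blocks I M a b ↔ prefers I (Sum.inl a) N M ∧ prefers I (Sum.inr b) N M := by
  have ha : ∀ b', (a, b') ∈ N → b' = b := fun b' h => (Prod.ext_iff.1 (hN.2.1 _ h _ hp rfl)).2
  have hb : ∀ a', (a', b) ∈ N → a' = a := fun a' h => (Prod.ext_iff.1 (hN.2.2 _ h _ hp rfl)).1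
  have hE := hN.1 _ hp
  simp only [Blocks, prefers, prefersA, prefersB]
  grind

theorem exists_better_partners_iff_prefers {a : A} {b : B} (hN : IsMatching I N) (hp : (a, b) ∈ N) :
    ((∃ b', (a, b') ∈ M ∧ I.prefA a b' b) ∧ ∃ a', (a', b) ∈ M ∧ I.prefB b a' a) ↔
      prefers I (Sum.inl a) M N ∧ prefers I (Sum.inr b) M N := by
  have ha : ∀ b', (a, b') ∈ N → b' = b := fun b' h => (Prod.ext_iff.1 (hN.2.1 _ h _ hp rfl)).2
  have hb : ∀ a', (a', b) ∈ N → a' = a := fun a' h => (Prod.ext_iff.1 (hN.2.2 _ h _ hp rfl)).1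
  simp only [prefers, prefersA, prefersB, matchedA, matchedB]
  grind

/-- The vote of the node `x` in the election of `N` against `M`: `1` for `N`, `-1` for `M`. -/
def vote (I : PrefSys A B) (N M : Finset (A × B)) (x : A ⊕ B) : ℤ :=
  (if prefers I x N M then 1 else 0) - (if prefers I x M N then 1 else 0)

theorem Delta_eq_sum_vote [Fintype A] [Fintype B] : Delta I N M = ∑ x, vote I N M x := by
  simp [Delta, phi, vote, Finset.sum_sub_distrib]

variable [DecidableEq A] [DecidableEq B]

theorem prefers_iff : prefers I x M N ↔ ∃ p ∈ M, x ∈ edgeOf p ∧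
    (x ∉ coveredNodes N ∨ ∃ q ∈ N, x ∈ edgeOf q ∧ I.nodePref x p q) := by
  rw [← unmatchedNode_iff]
  obtain a | b := x <;>
    simp [prefers, prefersA, prefersB, unmatchedNode, PrefSys.nodePref]

theorem not_prefers_of_not_mem_coveredNodes (h : x ∉ coveredNodes M) : ¬ prefers I x M N := by
  rw [mem_coveredNodes] at h
  rw [prefers_iff]
  grind

theorem not_prefers_of_not_mem_sdiff (hI : I.IsTournament) (hM : IsMatching I M)
    (hMN : x ∉ coveredNodes (M \ N)) (hNM : x ∉ coveredNodes (N \ M)) : ¬ prefers I x M N := by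
  simp only [mem_coveredNodes, Finset.mem_sdiff] at hMN hNM
  rw [prefers_iff, mem_coveredNodes]
  rintro ⟨p, hp, hxp, hunmatched | ⟨q, hq, hxq, hpq⟩⟩
  · exact hunmatched ⟨p, by grind⟩
  · obtain rfl : p = q := hM.eq_of_mem hp (by grind) hxp hxq
    exact hI.asymm x p p hpq hpq

theorem prefers_iff_not_prefers (hI : I.IsTournament) (hM : IsMatching I M) (hN : IsMatching I N)
    (hx : x ∈ coveredNodes (N \ M)) : prefers I x M N ↔ ¬ prefers I x N M := by
  obtain ⟨p, hp, hxp⟩ := mem_coveredNodes.1 hx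
  obtain ⟨hpN, hpM⟩ := Finset.mem_sdiff.1 hp
  have huniq : ∀ q ∈ N, x ∈ edgeOf q → q = p := fun q hq hxq => hN.eq_of_mem hq hpN hxq hxp
  by_cases hxM : x ∈ coveredNodes M
  · obtain ⟨q, hq, hxq⟩ := mem_coveredNodes.1 hxM
    have huniq' : ∀ r ∈ M, x ∈ edgeOf r → r = q := fun r hr hxr => hM.eq_of_mem hr hq hxr hxq
    have hasymm := hI.asymm x p q
    have htotal := hI.total x p q (hN.1 p hpN) (hM.1 q hq) hxp hxq (by grind)
    simp only [prefers_iff, mem_coveredNodes]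
    grind
  · have hgain : prefers I x N M := prefers_iff.2 ⟨p, hpN, hxp, .inl hxM⟩
    exact iff_of_false (not_prefers_of_not_mem_coveredNodes hxM) (not_not.2 hgain)

theorem wt_eq_vote_add_vote (hI : I.IsTournament) (hM : IsMatching I M) (hN : IsMatching I N)
    (hp : p ∈ N \ M) : wt I M p.1 p.2 = vote I N M (Sum.inl p.1) + vote I N M (Sum.inr p.2) := by
  obtain ⟨hpN, hpM⟩ := Finset.mem_sdiff.1 hp
  have hl := prefers_iff_not_prefers (x := Sum.inl p.1) hI hM hN
    (mem_coveredNodes.2 ⟨p, hp, by simp⟩)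
  have hr := prefers_iff_not_prefers (x := Sum.inr p.2) hI hM hN
    (mem_coveredNodes.2 ⟨p, hp, by simp⟩)
  simp only [wt, vote, blocks_iff_prefers hN hpN hpM, exists_better_partners_iff_prefers hN hpN,
    hl, hr]
  split_ifs <;> simp_all

theorem vote_eq_zero (hI : I.IsTournament) (hM : IsMatching I M) (hN : IsMatching I N)
    (hMN : x ∉ coveredNodes (M \ N)) (hNM : x ∉ coveredNodes (N \ M)) : vote I N M x = 0 := by
  rw [vote, if_neg (not_prefers_of_not_mem_sdiff hI hN hNM hMN),
    if_neg (not_prefers_of_not_mem_sdiff hI hM hMN hNM), sub_zero]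

theorem vote_eq_neg_one (hM : IsMatching I M) (hMN : x ∈ coveredNodes (M \ N))
    (hNM : x ∉ coveredNodes (N \ M)) : vote I N M x = -1 := by
  obtain ⟨p, hp, hxp⟩ := mem_coveredNodes.1 hMN
  obtain ⟨hpM, hpN⟩ := Finset.mem_sdiff.1 hp
  have hxN : x ∉ coveredNodes N := by
    intro hx
    obtain ⟨q, hq, hxq⟩ := mem_coveredNodes.1 hx
    by_cases hqM : q ∈ M
    · exact hpN (hM.eq_of_mem hpM hqM hxp hxq ▸ hq)
    · exact hNM (mem_coveredNodes.2 ⟨q, Finset.mem_sdiff.2 ⟨hq, hqM⟩, hxq⟩)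
  rw [vote, if_neg (not_prefers_of_not_mem_coveredNodes hxN),
    if_pos (prefers_iff.2 ⟨p, hpM, hxp, .inl hxN⟩), zero_sub]

variable [Fintype A] [Fintype B]

theorem Delta_eq_sum_wt_sub_card (hI : I.IsTournament) (hM : IsMatching I M)
    (hN : IsMatching I N) :
    Delta I N M = ∑ p ∈ N \ M, wt I M p.1 p.2 -
      (coveredNodes (M \ N) \ coveredNodes (N \ M)).card := by
  set gained := coveredNodes (N \ M)
  set lost := coveredNodes (M \ N) \ gained
  have hgained : ∑ x ∈ gained, vote I N M x = ∑ p ∈ N \ M, wt I M p.1 p.2 := by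
    rw [(hN.mono Finset.sdiff_subset).sum_coveredNodes]
    exact Finset.sum_congr rfl fun p hp => (wt_eq_vote_add_vote hI hM hN hp).symm
  have hlost : ∑ x ∈ lost, vote I N M x = -lost.card := by
    rw [Finset.sum_congr rfl fun x hx => vote_eq_neg_one hM
      (Finset.mem_sdiff.1 hx).1 (Finset.mem_sdiff.1 hx).2]
    simp [lost]
  calc
    Delta I N M = ∑ x, vote I N M x := Delta_eq_sum_vote
    _ = ∑ x ∈ gained ∪ lost, vote I N M x := by
      refine (Finset.sum_subset (Finset.subset_univ _) fun x _ hx => ?_).symm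
      exact vote_eq_zero hI hM hN (by grind) (by grind)
    _ = ∑ x ∈ gained, vote I N M x + ∑ x ∈ lost, vote I N M x :=
      Finset.sum_union Finset.disjoint_sdiff
    _ = _ := by rw [hgained, hlost, sub_eq_add_neg]

theorem Delta_symmDiff (hI : I.IsTournament) (hM : IsMatching I M)
    (hN : IsMatching I (symmDiff M P)) :
    Delta I (symmDiff M P) M = ∑ p ∈ P, wt I M p.1 p.2 -
      (coveredNodes (M ∩ P) \ coveredNodes (P \ M)).card := by
  have hwt : ∑ p ∈ P \ M, wt I M p.1 p.2 = ∑ p ∈ P, wt I M p.1 p.2 :=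
    Finset.sum_subset Finset.sdiff_subset fun p hp hpM =>
      wt_eq_zero_of_mem hI hM (by grind)
  rw [Delta_eq_sum_wt_sub_card hI hM hN, symmDiff_sdiff_left, sdiff_symmDiff_left, hwt,
    Finset.inf_eq_inter]

end Votes

section WalkEdges

variable {I : PrefSys A B} {M : Finset (A × B)} {u v x : A ⊕ B} {ρ : (graphOf I).Walk u v}

theorem edgeOf_mem_edgeSet_iff {p : A × B} : edgeOf p ∈ (graphOf I).edgeSet ↔ I.E p.1 p.2 := by
  simp [edgeOf, graphOf]

theorem exists_eq_edgeOf {e : Sym2 (A ⊕ B)} (he : e ∈ (graphOf I).edgeSet) :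
    ∃ p : A × B, e = edgeOf p := by
  induction e with
  | _ x y =>
    obtain a | b := x <;> obtain a' | b' := y
    · simp [graphOf] at he
    · exact ⟨(a, b'), rfl⟩
    · exact ⟨(a', b), Sym2.eq_swap⟩
    · simp [graphOf] at he

variable [Fintype A] [Fintype B]

theorem mem_pairsOf {p : A × B} : p ∈ pairsOf I ρ ↔ edgeOf p ∈ ρ.edges := by
  simp [pairsOf, edgeOf]

theorem wtWalk_eq_sum_pairsOf (hρ : ρ.edges.Nodup) :
    wtWalk I M ρ = ∑ p ∈ pairsOf I ρ, wt I M p.1 p.2 := by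
  have hedges : ρ.edges.toFinset = (pairsOf I ρ).image edgeOf := by
    ext e
    simp only [List.mem_toFinset, Finset.mem_image, mem_pairsOf]
    constructor
    · intro he
      obtain ⟨p, rfl⟩ := exists_eq_edgeOf (ρ.edges_subset_edgeSet he)
      exact ⟨p, he, rfl⟩
    · rintro ⟨p, hp, rfl⟩
      exact hp
  rw [wtWalk, ← List.sum_toFinset _ hρ, hedges, Finset.sum_image edgeOf_injective.injOn]
  rfl

variable [DecidableEq A] [DecidableEq B]

theorem isMatching_pairsOf_sdiff
    (h : ρ.edges.Pairwise fun e f => ∀ x ∈ e, x ∈ f → (edgeInM M e ↔ ¬ edgeInM M f)) :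
    IsMatching I (pairsOf I ρ \ M) := by
  have : Std.Symm fun e f => ∀ x ∈ e, x ∈ f → (edgeInM M e ↔ ¬ edgeInM M f) :=
    ⟨fun e f hef x hf he => by rw [hef x he hf, not_not]⟩
  simp only [isMatching_iff, Finset.mem_sdiff, mem_pairsOf]
  refine ⟨fun p hp => edgeOf_mem_edgeSet_iff.1 (ρ.edges_subset_edgeSet hp.1), ?_⟩
  intro x p hp q hq hxp hxq
  by_contra hne
  have halt := h.forall hp.1 hq.1 (edgeOf_injective.ne hne) x hxp hxq
  simp only [edgeInM_edgeOf] at halt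
  exact hp.2 (halt.2 hq.2)

theorem mem_coveredNodes_inter_pairsOf :
    x ∈ coveredNodes (M ∩ pairsOf I ρ) ↔ ∃ e ∈ ρ.edges, x ∈ e ∧ edgeInM M e := by
  simp only [mem_coveredNodes, Finset.mem_inter, mem_pairsOf]
  constructor
  · rintro ⟨p, ⟨hpM, hp⟩, hxp⟩
    exact ⟨edgeOf p, hp, hxp, edgeInM_edgeOf.2 hpM⟩
  · rintro ⟨e, he, hxe, heM⟩
    obtain ⟨p, rfl⟩ := exists_eq_edgeOf (ρ.edges_subset_edgeSet he)
    exact ⟨p, ⟨edgeInM_edgeOf.1 heM, he⟩, hxe⟩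

theorem mem_coveredNodes_pairsOf_sdiff :
    x ∈ coveredNodes (pairsOf I ρ \ M) ↔ ∃ e ∈ ρ.edges, x ∈ e ∧ ¬ edgeInM M e := by
  simp only [mem_coveredNodes, Finset.mem_sdiff, mem_pairsOf]
  constructor
  · rintro ⟨p, ⟨hp, hpM⟩, hxp⟩
    exact ⟨edgeOf p, hp, hxp, edgeInM_edgeOf.not.2 hpM⟩
  · rintro ⟨e, he, hxe, heM⟩
    obtain ⟨p, rfl⟩ := exists_eq_edgeOf (ρ.edges_subset_edgeSet he)
    exact ⟨p, ⟨he, edgeInM_edgeOf.not.1 heM⟩, hxe⟩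

end WalkEdges

section Exchange

variable {I : PrefSys A B} {M P : Finset (A × B)}
  [Fintype A] [Fintype B] [DecidableEq A] [DecidableEq B]

theorem symmDiff_of_coveredNodes_eq (hI : I.IsTournament) (hM : IsMatching I M)
    (hP : IsMatching I (P \ M)) (h : coveredNodes (P \ M) = coveredNodes (M ∩ P)) :
    IsMatching I (symmDiff M P) ∧ (symmDiff M P).card = M.card ∧
      Delta I (symmDiff M P) M = ∑ p ∈ P, wt I M p.1 p.2 := by
  have hN : IsMatching I (symmDiff M P) :=
    isMatching_symmDiff hM hP (h ▸ Finset.inter_subset_left)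
  refine ⟨hN, card_symmDiff_eq_card hM hP (by rw [h]), ?_⟩
  simp [Delta_symmDiff hI hM hN, h]

theorem symmDiff_of_coveredNodes_eq_erase (hI : I.IsTournament) (hM : IsMatching I M)
    (hP : IsMatching I (P \ M)) {V : Finset (A ⊕ B)} {s t : A ⊕ B} (hsV : s ∈ V) (htV : t ∈ V)
    (hst : s ≠ t) (hs : unmatchedNode M s) (hin : coveredNodes (M ∩ P) = V.erase s)
    (hout : coveredNodes (P \ M) = V.erase t) :
    IsMatching I (symmDiff M P) ∧ (symmDiff M P).card = M.card ∧
      Delta I (symmDiff M P) M = ∑ p ∈ P, wt I M p.1 p.2 - 1 := by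
  rw [unmatchedNode_iff] at hs
  have hN : IsMatching I (symmDiff M P) := by
    refine isMatching_symmDiff hM hP fun x hx => ?_
    rw [hin]
    grind
  have hlost : coveredNodes (M ∩ P) \ coveredNodes (P \ M) = {t} := by
    rw [hin, hout]
    grind
  refine ⟨hN, card_symmDiff_eq_card hM hP ?_, ?_⟩
  · rw [hin, hout, Finset.card_erase_of_mem hsV, Finset.card_erase_of_mem htV]
  · simp [Delta_symmDiff hI hM hN, hlost]

theorem symmDiff_of_isAltCycle (hI : I.IsTournament) (hM : IsMatching I M) {v : A ⊕ B}
    {c : (graphOf I).Walk v v} (hc : IsAltCycle I M c) :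
    IsMatching I (symmDiff M (pairsOf I c)) ∧ (symmDiff M (pairsOf I c)).card = M.card ∧
      Delta I (symmDiff M (pairsOf I c)) M = wtWalk I M c := by
  obtain ⟨hcycle, hchain⟩ := hc
  have hne : c.edges ≠ [] := by simpa using hcycle.ne_nil
  obtain ⟨halt, hwrap⟩ := (isChain_append_take_one_iff hne).1 hchain
  have hcov : coveredNodes (pairsOf I c \ M) = coveredNodes (M ∩ pairsOf I c) := by
    ext x
    rw [mem_coveredNodes_inter_pairsOf, mem_coveredNodes_pairsOf_sdiff,
      exists_mem_edges_iff_mem_support hne halt hwrap,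
      exists_mem_edges_iff_mem_support (Q := fun e => ¬ edgeInM M e) hne
        (halt.imp fun _ _ => not_congr) (not_congr hwrap)]
  rw [wtWalk_eq_sum_pairsOf hcycle.edges_nodup]
  exact symmDiff_of_coveredNodes_eq hI hM
    (isMatching_pairsOf_sdiff (pairwise_edges_alternate_of_isCycle hcycle hne halt hwrap)) hcov

theorem symmDiff_of_isAltPath (hI : I.IsTournament) (hM : IsMatching I M) {u v : A ⊕ B}
    {p : (graphOf I).Walk u v} (hne : p.edges ≠ []) (hp : IsAltPath I M p)
    (hends : (unmatchedNode M u ∧ ¬ edgeInM M (p.edges.head hne) ∧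
        edgeInM M (p.edges.getLast hne)) ∨
      (unmatchedNode M v ∧ ¬ edgeInM M (p.edges.getLast hne) ∧ edgeInM M (p.edges.head hne))) :
    IsMatching I (symmDiff M (pairsOf I p)) ∧ (symmDiff M (pairsOf I p)).card = M.card ∧
      Delta I (symmDiff M (pairsOf I p)) M = wtWalk I M p - 1 := by
  obtain ⟨hpath, halt⟩ := hp
  have halt' : p.edges.IsChain fun e f => (¬ edgeInM M e ↔ ¬ ¬ edgeInM M f) :=
    halt.imp fun _ _ => not_congr
  have huv : u ≠ v := by
    rintro rfl
    exact hne (SimpleGraph.Walk.edges_eq_nil.2 (SimpleGraph.Walk.isPath_iff_nil.1 hpath))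
  have hu : u ∈ p.support.toFinset := by simp
  have hv : v ∈ p.support.toFinset := by simp
  have hP := isMatching_pairsOf_sdiff (pairwise_edges_alternate_of_isPath hpath halt)
  rw [wtWalk_eq_sum_pairsOf hpath.isTrail.edges_nodup]
  obtain ⟨hunmatched, hhead, hlast⟩ | ⟨hunmatched, hlast, hhead⟩ := hends
  · refine symmDiff_of_coveredNodes_eq_erase hI hM hP hu hv huv hunmatched ?_ ?_ <;> ext x <;>
      rw [Finset.mem_erase, List.mem_toFinset]
    · rw [mem_coveredNodes_inter_pairsOf,
        exists_mem_edges_iff_ne_start_of_isPath hpath hne halt hhead hlast]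
    · rw [mem_coveredNodes_pairsOf_sdiff, exists_mem_edges_iff_ne_end_of_isPath
        (Q := fun e => ¬ edgeInM M e) hpath hne halt' hhead (not_not.2 hlast)]
  · refine symmDiff_of_coveredNodes_eq_erase hI hM hP hv hu huv.symm hunmatched ?_ ?_ <;> ext x <;>
      rw [Finset.mem_erase, List.mem_toFinset]
    · rw [mem_coveredNodes_inter_pairsOf,
        exists_mem_edges_iff_ne_end_of_isPath hpath hne halt hhead hlast]
    · rw [mem_coveredNodes_pairsOf_sdiff, exists_mem_edges_iff_ne_start_of_isPath
        (Q := fun e => ¬ edgeInM M e) hpath hne halt' (not_not.2 hhead) hlast]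

end Exchange

theorem stmt1_general [Fintype A] [Fintype B] [DecidableEq A] [DecidableEq B]
    {I : PrefSys A B} (hI : I.IsTournament) {M : Finset (A × B)} (hM : IsMatching I M) :
    (∀ (v : A ⊕ B) (c : (graphOf I).Walk v v), IsAltCycle I M c →
        IsMatching I (symmDiff M (pairsOf I c)) ∧
        (symmDiff M (pairsOf I c)).card = M.card ∧
        Delta I (symmDiff M (pairsOf I c)) M = wtWalk I M c) ∧
    (∀ (u v : A ⊕ B) (p : (graphOf I).Walk u v) (hne : p.edges ≠ []),
        IsAltPath I M p →
        ((unmatchedNode M u ∧ ¬ edgeInM M (p.edges.head hne) ∧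
            edgeInM M (p.edges.getLast hne)) ∨
         (unmatchedNode M v ∧ ¬ edgeInM M (p.edges.getLast hne) ∧
            edgeInM M (p.edges.head hne))) →
        IsMatching I (symmDiff M (pairsOf I p)) ∧
        (symmDiff M (pairsOf I p)).card = M.card ∧
        Delta I (symmDiff M (pairsOf I p)) M = wtWalk I M p - 1) :=
  ⟨fun _ _ hc => symmDiff_of_isAltCycle hI hM hc,
    fun _ _ _ hne hp hends => symmDiff_of_isAltPath hI hM hne hp hends⟩

/-- If `ρ` is an alternating cycle wrt a maximum matching `M`, or an
alternating path wrt `M` one of whose endpoints is unmatched in `M` (with the edge of `ρ`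
there not in `M`) while the edge of `ρ` at the other endpoint is in `M`, and `wt_M(ρ) ≥ 2`,
then `N = M ⊕ ρ` is a maximum matching with `Δ(N,M) ≥ wt_M(ρ) − 1 ≥ 1`; in particular `N`
is a maximum matching that is more popular than `M`. -/
theorem stmt1 {A B : Type*} [Fintype A] [Fintype B] [DecidableEq A] [DecidableEq B]
    (I : PrefSys A B) (hI : I.IsValid) (M : Finset (A × B))
    (hM : IsMaximumMatching I M) :
    (∀ (v : A ⊕ B) (c : (graphOf I).Walk v v), IsAltCycle I M c →
        2 ≤ wtWalk I M c →
        IsMaximumMatching I (symmDiff M (pairsOf I c)) ∧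
        wtWalk I M c - 1 ≤ Delta I (symmDiff M (pairsOf I c)) M ∧
        1 ≤ Delta I (symmDiff M (pairsOf I c)) M) ∧
    (∀ (u v : A ⊕ B) (p : (graphOf I).Walk u v) (hne : p.edges ≠ []),
        IsAltPath I M p →
        ((unmatchedNode M u ∧ ¬ edgeInM M (p.edges.head hne) ∧
            edgeInM M (p.edges.getLast hne)) ∨
         (unmatchedNode M v ∧ ¬ edgeInM M (p.edges.getLast hne) ∧
            edgeInM M (p.edges.head hne))) →
        2 ≤ wtWalk I M p →
        IsMaximumMatching I (symmDiff M (pairsOf I p)) ∧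
        wtWalk I M p - 1 ≤ Delta I (symmDiff M (pairsOf I p)) M ∧
        1 ≤ Delta I (symmDiff M (pairsOf I p)) M) := by
  obtain ⟨hcycle, hpath⟩ := stmt1_general hI.isTournament hM.1
  constructor
  · intro v c hc hwt
    obtain ⟨hN, hcard, hDelta⟩ := hcycle v c hc
    exact ⟨hM.of_card_eq hN hcard, by lia, by lia⟩
  · intro u v p hne hp hends hwt
    obtain ⟨hN, hcard, hDelta⟩ := hpath u v p hne hp hends
    exact ⟨hM.of_card_eq hN hcard, by lia, by lia⟩

end PopMax
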